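/- Let n ∈ ℕ, let (κ, k) be a pair of kernels from L_n, let φ ∈ C_{−1}(0,∞) and set f = k * φ. Then g := κ * f satisfies g(t) = (I₀₊ⁿ φ)(t) = ∫₀ᵗ ((t−τ)^{n−1}/(n−1)!) φ(τ) dτ for all t > 0; in particular g ∈ Cⁿ_{−1}(0,∞) and g^{(j)}(0+) = 0 for j = 0, 1, …, n−1. -/

import Mathlib

open Real MeasureTheory Set Filter Topology

/-- The Laplace convolution `(f * g)(t) = ∫₀ᵗ f(t-τ) g(τ) dτ`. -/
noncomputable def lconv (f g : ℝ → ℝ) : ℝ → ℝ :=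
  fun t => ∫ τ in (0:ℝ)..t, f (t - τ) * g τ

/-- The space `C_{-1}(0,∞)`: functions of the form `t^p f₁(t)` with `p > -1`
and `f₁` continuous on `[0,∞)`. -/
def Cm1 (f : ℝ → ℝ) : Prop :=
  ∃ p : ℝ, -1 < p ∧ ∃ f₁ : ℝ → ℝ, ContinuousOn f₁ (Set.Ici 0) ∧
    ∀ t : ℝ, 0 < t → f t = t ^ p * f₁ t

/-- The subspace `C_{-1,0}(0,∞)`: functions of the form `t^p f₁(t)` with `-1 < p < 0`
and `f₁` continuous on `[0,∞)`. -/
def Cm10 (f : ℝ → ℝ) : Prop :=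
  ∃ p : ℝ, -1 < p ∧ p < 0 ∧ ∃ f₁ : ℝ → ℝ, ContinuousOn f₁ (Set.Ici 0) ∧
    ∀ t : ℝ, 0 < t → f t = t ^ p * f₁ t

/-!
The space `C_{-1}(0,∞)` is closed under Laplace convolution: rescaling `τ = t s` gives
`(t^p f₁ * t^q g₁)(t) = t^(p+q+1) ∫₀¹ (1-s)^p s^q f₁(t(1-s)) g₁(ts) ds`, and the last integral is
continuous in `t`. Hence all iterated convolutions converge absolutely, and Fubini gives
associativity on `C_{-1}(0,∞)`, so that `κ * (k * φ) = (κ * k) * φ = t^(n-1)/(n-1)! * φ`.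
Since `t^(n-1)/(n-1)!` is the `n`-fold convolution power of `1`, associativity also shows that this
is the `n`-fold iterated primitive of `φ`, whose derivatives of order `j < n` are the shorter
iterated primitives: they are differentiable on `(0,∞)` and vanish at `0+`.
-/

section

open scoped Convolution

theorem continuous_intervalIntegral_smul {X E : Type*} [TopologicalSpace X]
    [FirstCountableTopology X] [LocallyCompactSpace X] [NormedAddCommGroup E] [NormedSpace ℝ E]
    {μ : Measure ℝ} {a b : ℝ} {w : ℝ → ℝ} {h : X → ℝ → E}
    (hw : IntervalIntegrable w μ a b) (hh : Continuous h.uncurry) :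
    Continuous fun x => ∫ s in a..b, w s • h x s ∂μ := by
  refine continuous_iff_continuousAt.2 fun x₀ => ?_
  obtain ⟨U, hU, hx₀⟩ := exists_compact_mem_nhds x₀
  obtain ⟨C, hC⟩ := (hU.prod isCompact_uIcc).exists_bound_of_continuousOn
    (hh.continuousOn (s := U ×ˢ uIcc a b))
  refine intervalIntegral.continuousAt_of_dominated_interval (bound := fun s => ‖w s‖ * C)
    ?measurable ?bound (hw.norm.mul_const C) ?continuous
  case measurable =>
    exact .of_forall fun x =>
      hw.def'.aestronglyMeasurable.smul (by fun_prop : Continuous (h x)).aestronglyMeasurable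
  case bound =>
    filter_upwards [hx₀] with x hx
    refine .of_forall fun s hs => ?_
    rw [norm_smul]
    gcongr
    exact hC (x, s) ⟨hx, uIoc_subset_uIcc hs⟩
  case continuous =>
    exact .of_forall fun s _ => by fun_prop

variable {f g h : ℝ → ℝ}

theorem Cm10.cm1 (hf : Cm10 f) : Cm1 f := by
  obtain ⟨p, hp, _, f₁, hf₁⟩ := hf
  exact ⟨p, hp, f₁, hf₁⟩

namespace Cm1

theorem of_continuousOn (hf : ContinuousOn f (Ici 0)) : Cm1 f :=
  ⟨0, by norm_num, f, hf, fun t _ => by rw [rpow_zero, one_mul]⟩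

theorem congr (hf : Cm1 f) (hgf : EqOn g f (Ioi 0)) : Cm1 g := by
  obtain ⟨p, hp, f₁, hf₁, hff₁⟩ := hf
  exact ⟨p, hp, f₁, hf₁, fun t ht => (hgf ht).trans (hff₁ t ht)⟩

theorem norm (hf : Cm1 f) : Cm1 fun t => ‖f t‖ := by
  obtain ⟨p, hp, f₁, hf₁, hff₁⟩ := hf
  refine ⟨p, hp, fun t => ‖f₁ t‖, hf₁.norm, fun t ht => ?_⟩
  simp only [hff₁ t ht, norm_mul, norm_of_nonneg (rpow_nonneg ht.le p)]

theorem exists_continuous (hf : Cm1 f) :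
    ∃ p : ℝ, -1 < p ∧ ∃ f₁ : ℝ → ℝ, Continuous f₁ ∧ EqOn f (fun t => t ^ p * f₁ t) (Ioi 0) := by
  obtain ⟨p, hp, f₁, hf₁, hff₁⟩ := hf
  refine ⟨p, hp, fun t => f₁ (max 0 t), ?_, fun t (ht : 0 < t) => ?_⟩
  · exact hf₁.comp_continuous (by fun_prop) fun t => le_max_left 0 t
  · simp only [max_eq_right ht.le, hff₁ t ht]

theorem continuousOn (hf : Cm1 f) : ContinuousOn f (Ioi 0) := by
  obtain ⟨p, -, f₁, hf₁, hff₁⟩ := hf.exists_continuous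
  refine ContinuousOn.congr (ContinuousOn.mul ?_ hf₁.continuousOn) hff₁
  exact continuousOn_id.rpow_const fun t ht => .inl (ne_of_gt ht)

theorem intervalIntegrable (hf : Cm1 f) {t : ℝ} (ht : 0 ≤ t) :
    IntervalIntegrable f volume 0 t := by
  obtain ⟨p, hp, f₁, hf₁, hff₁⟩ := hf.exists_continuous
  refine ((intervalIntegral.intervalIntegrable_rpow' hp).mul_continuousOn
    hf₁.continuousOn).congr fun s hs => (hff₁ ?_).symm
  exact (uIoc_of_le ht ▸ hs).1

end Cm1

theorem lconv_congr {f' g' : ℝ → ℝ} (hf : EqOn f f' (Ioi 0)) (hg : EqOn g g' (Ioi 0)) :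
    EqOn (lconv f g) (lconv f' g') (Ioi 0) := by
  intro t ht
  refine intervalIntegral.integral_congr_uIoo fun τ hτ => ?_
  rw [uIoo_of_le (le_of_lt ht)] at hτ
  simp only [hf (sub_pos.2 hτ.2), hg hτ.1]

/-- Each factor is singular only at its own end of `(0, t)`: on either half of the interval one
factor is integrable and the other is continuous up to the boundary. -/
theorem Cm1.intervalIntegrable_lconv (hf : Cm1 f) (hg : Cm1 g) {t : ℝ} (ht : 0 < t) :
    IntervalIntegrable (fun τ => f (t - τ) * g τ) volume 0 t := by
  have first_half {u v : ℝ → ℝ} (hu : Cm1 u) (hv : Cm1 v) :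
      IntervalIntegrable (fun τ => u (t - τ) * v τ) volume 0 (t / 2) := by
    refine (hv.intervalIntegrable (half_pos ht).le).continuousOn_mul ?_
    refine hu.continuousOn.comp (by fun_prop) fun τ hτ => ?_
    rw [uIcc_of_le (half_pos ht).le] at hτ
    exact sub_pos.2 (hτ.2.trans_lt (half_lt_self ht))
  have second_half : IntervalIntegrable (fun τ => f (t - τ) * g τ) volume (t / 2) t := by
    simpa only [sub_sub_cancel, sub_zero, sub_half, mul_comm] using
      ((first_half hg hf).comp_sub_left t).symm
  exact (first_half hf hg).trans second_half

theorem lconv_eq_mul_integral (f g : ℝ → ℝ) (t : ℝ) :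
    lconv f g t = t * ∫ s in (0 : ℝ)..1, f (t * (1 - s)) * g (t * s) := by
  simpa only [mul_sub, mul_one, mul_zero] using!
    (intervalIntegral.mul_integral_comp_mul_left (a := 0) (b := 1)
      (f := fun τ => f (t - τ) * g τ) t).symm

protected theorem Cm1.lconv (hf : Cm1 f) (hg : Cm1 g) : Cm1 (lconv f g) := by
  obtain ⟨p, hp, f₁, hf₁, hff₁⟩ := hf.exists_continuous
  obtain ⟨q, hq, g₁, hg₁, hgg₁⟩ := hg.exists_continuous
  have cm1_rpow {r : ℝ} (hr : -1 < r) : Cm1 fun s => s ^ r :=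
    ⟨r, hr, 1, continuousOn_const, fun s _ => (mul_one _).symm⟩
  have hbeta : IntervalIntegrable (fun s : ℝ => (1 - s) ^ p * s ^ q) volume 0 1 :=
    (cm1_rpow hp).intervalIntegrable_lconv (cm1_rpow hq) one_pos
  refine ⟨p + q + 1, by linarith,
    fun t => ∫ s in (0 : ℝ)..1, ((1 - s) ^ p * s ^ q) • (f₁ (t * (1 - s)) * g₁ (t * s)),
    (continuous_intervalIntegral_smul hbeta (by fun_prop)).continuousOn, fun t ht => ?_⟩
  calc lconv f g t
      = t * ∫ s in (0 : ℝ)..1, (t * (1 - s)) ^ p * f₁ (t * (1 - s)) *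
          ((t * s) ^ q * g₁ (t * s)) := by
        rw [lconv_congr hff₁ hgg₁ ht, lconv_eq_mul_integral]
    _ = t * ∫ s in (0 : ℝ)..1, t ^ p * t ^ q *
          (((1 - s) ^ p * s ^ q) • (f₁ (t * (1 - s)) * g₁ (t * s))) := by
        refine congr_arg (t * ·) (intervalIntegral.integral_congr_uIoo fun s hs => ?_)
        rw [uIoo_of_le zero_le_one] at hs
        simp only [mul_rpow ht.le (sub_nonneg.2 hs.2.le), mul_rpow ht.le hs.1.le, smul_eq_mul]
        ring
    _ = t ^ (p + q + 1) *
          ∫ s in (0 : ℝ)..1, ((1 - s) ^ p * s ^ q) • (f₁ (t * (1 - s)) * g₁ (t * s)) := by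
        rw [intervalIntegral.integral_const_mul, rpow_add ht, rpow_add ht, rpow_one]
        ring

theorem indicator_lconv (f g : ℝ → ℝ) :
    (Ioi 0).indicator (lconv f g) =
      (Ioi 0).indicator f ⋆[.mul ℝ ℝ] (Ioi 0).indicator g := by
  rw [← convolution_flip]
  exact posConvolution_eq_convolution_indicator g f (.flip (.mul ℝ ℝ)) volume

theorem lconv_eqOn_convolution (f g : ℝ → ℝ) :
    EqOn (lconv f g) ((Ioi 0).indicator f ⋆[.mul ℝ ℝ] (Ioi 0).indicator g) (Ioi 0) := by
  rw [← indicator_lconv]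
  exact eqOn_indicator.symm

theorem Cm1.convolutionExists (hf : Cm1 f) (hg : Cm1 g) :
    ConvolutionExists ((Ioi 0).indicator f) ((Ioi 0).indicator g) (.mul ℝ ℝ) := by
  intro t
  have hsupp : (fun τ => (Ioi 0).indicator f τ * (Ioi 0).indicator g (t - τ)) =
      (Ioo 0 t).indicator fun τ => g (t - τ) * f τ := by
    ext τ
    by_cases h₀ : 0 < τ <;> by_cases ht : τ < t <;> simp [indicator, h₀, ht, mul_comm]
  change Integrable fun τ => (Ioi 0).indicator f τ * (Ioi 0).indicator g (t - τ)
  rw [hsupp, integrable_indicator_iff measurableSet_Ioo]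
  rcases le_or_gt t 0 with ht | ht
  · simp only [Ioo_eq_empty ht.not_gt, integrableOn_empty]
  · exact (intervalIntegrable_iff_integrableOn_Ioo_of_le ht.le).1
      (hg.intervalIntegrable_lconv hf ht)

theorem Cm1.aestronglyMeasurable_indicator (hf : Cm1 f) :
    AEStronglyMeasurable ((Ioi 0).indicator f) :=
  (aestronglyMeasurable_indicator_iff measurableSet_Ioi).2
    (hf.continuousOn.aestronglyMeasurable measurableSet_Ioi)

theorem lconv_assoc (hf : Cm1 f) (hg : Cm1 g) (hh : Cm1 h) :
    EqOn (lconv (lconv f g) h) (lconv f (lconv g h)) (Ioi 0) := by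
  intro t ht
  rw [lconv_eqOn_convolution _ _ ht, lconv_eqOn_convolution _ _ ht, indicator_lconv,
    indicator_lconv]
  refine convolution_assoc _ _ _ _ mul_assoc hf.aestronglyMeasurable_indicator
    hg.aestronglyMeasurable_indicator hh.aestronglyMeasurable_indicator
    (.of_forall (hf.convolutionExists hg)) (.of_forall fun s => ?_) ?_
  · simpa only [norm_indicator_eq_indicator_norm] using hg.norm.convolutionExists hh.norm s
  · simpa only [norm_indicator_eq_indicator_norm, indicator_lconv] using
      hf.norm.convolutionExists (hg.norm.lconv hh.norm) t

/-- The integration operator `I₀₊`; its iterate `primitive^[n]` is the `n`-fold integral `I₀₊ⁿ`. -/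
noncomputable def primitive (f : ℝ → ℝ) : ℝ → ℝ :=
  fun t => ∫ τ in (0 : ℝ)..t, f τ

theorem lconv_one_left (f : ℝ → ℝ) : lconv (fun _ => 1) f = primitive f := by
  ext t
  simp only [lconv, primitive, one_mul]

theorem primitive_pow_div_factorial (m : ℕ) :
    primitive (fun s : ℝ => s ^ m / m.factorial) =
      fun s : ℝ => s ^ (m + 1) / (m + 1).factorial := by
  ext t
  simp only [primitive, intervalIntegral.integral_div, integral_pow, ne_eq, Nat.succ_ne_zero,
    not_false_eq_true, zero_pow, sub_zero, Nat.factorial_succ, Nat.cast_mul, Nat.cast_succ,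
    div_div]

namespace Cm1

theorem continuousOn_primitive (hf : Cm1 f) : ContinuousOn (primitive f) (Ici 0) := by
  obtain ⟨p, hp, f₁, hf₁, hff₁⟩ := hf.exists_continuous
  have hcont : Continuous (primitive fun t => t ^ p * f₁ t) :=
    intervalIntegral.continuous_primitive (fun a b =>
      (intervalIntegral.intervalIntegrable_rpow' hp).mul_continuousOn hf₁.continuousOn) 0
  refine hcont.continuousOn.congr fun t ht => ?_
  refine intervalIntegral.integral_congr_uIoo fun τ hτ => hff₁ ?_
  exact (uIoo_of_le (mem_Ici.1 ht) ▸ hτ).1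

protected theorem primitive (hf : Cm1 f) : Cm1 (primitive f) :=
  of_continuousOn hf.continuousOn_primitive

theorem iterate_primitive (hf : Cm1 f) : ∀ m : ℕ, Cm1 (primitive^[m] f)
  | 0 => hf
  | m + 1 => by
    rw [Function.iterate_succ_apply']
    exact (hf.iterate_primitive m).primitive

theorem tendsto_primitive (hf : Cm1 f) :
    Tendsto (primitive f) (𝓝[>] 0) (𝓝 0) := by
  have hzero : primitive f 0 = 0 := intervalIntegral.integral_same
  simpa only [hzero] using
    (hf.continuousOn_primitive 0 self_mem_Ici).mono_left (nhdsWithin_mono 0 Ioi_subset_Ici_self)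

theorem hasDerivAt_primitive (hf : Cm1 f) {t : ℝ} (ht : 0 < t) :
    HasDerivAt (primitive f) (f t) t :=
  intervalIntegral.integral_hasDerivAt_right (hf.intervalIntegrable ht.le)
    (hf.continuousOn.stronglyMeasurableAtFilter isOpen_Ioi t ht)
    (hf.continuousOn.continuousAt (Ioi_mem_nhds ht))

theorem iteratedDeriv_iterate_primitive (hf : Cm1 f) (i j : ℕ) :
    EqOn (iteratedDeriv j (primitive^[i + j] f)) (primitive^[i] f) (Ioi 0) := by
  induction j with
  | zero => exact fun _ _ => by rw [iteratedDeriv_zero, add_zero]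
  | succ j ih =>
    have hderiv : EqOn (deriv (primitive^[i + j + 1] f))
        (primitive^[i + j] f) (Ioi 0) := fun t ht => by
      rw [Function.iterate_succ_apply']
      exact ((hf.iterate_primitive (i + j)).hasDerivAt_primitive ht).deriv
    rw [iteratedDeriv_succ', ← add_assoc]
    exact (hderiv.iteratedDeriv_of_isOpen isOpen_Ioi j).trans ih

theorem iterate_primitive_succ_eqOn_lconv (hf : Cm1 f) (m : ℕ) :
    EqOn (primitive^[m + 1] f) (lconv (fun s => s ^ m / m.factorial) f) (Ioi 0) := by
  induction m with
  | zero => exact fun t _ => by simp [lconv, primitive]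
  | succ m ih =>
    have hone : Cm1 fun _ => 1 := of_continuousOn continuousOn_const
    have hpow : Cm1 fun s => s ^ m / m.factorial := of_continuousOn (by fun_prop)
    rw [Function.iterate_succ_apply', ← lconv_one_left, ← primitive_pow_div_factorial,
      ← lconv_one_left fun s => s ^ m / _]
    exact (lconv_congr (eqOn_refl _ _) ih).trans (lconv_assoc hone hpow hf).symm

end Cm1

end

theorem statement13_general (n : ℕ) (hn : 1 ≤ n) (κ k : ℝ → ℝ)
    (hκ : Cm1 κ) (hk : Cm1 k)
    (hL : ∀ t : ℝ, 0 < t → lconv κ k t = t ^ (n - 1) / (n - 1).factorial)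
    (φ f : ℝ → ℝ) (hφ : Cm1 φ)
    (hf : ∀ t : ℝ, 0 < t → f t = lconv k φ t) :
    (∀ t : ℝ, 0 < t →
        lconv κ f t = ∫ τ in (0:ℝ)..t, (t - τ) ^ (n - 1) / (n - 1).factorial * φ τ) ∧
      (∀ j < n, ∀ t : ℝ, 0 < t → DifferentiableAt ℝ (iteratedDeriv j (lconv κ f)) t) ∧
      Cm1 (iteratedDeriv n (lconv κ f)) ∧
      ∀ j < n, Filter.Tendsto (iteratedDeriv j (lconv κ f))
        (nhdsWithin 0 (Set.Ioi 0)) (nhds 0) := by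
  have hconv : EqOn (lconv κ f) (lconv (fun s => s ^ (n - 1) / (n - 1).factorial) φ) (Ioi 0) :=
    ((lconv_congr (eqOn_refl κ _) hf).trans (lconv_assoc hκ hk hφ).symm).trans
      (lconv_congr hL (eqOn_refl φ _))
  have hprim : EqOn (lconv κ f) (primitive^[n] φ) (Ioi 0) := by
    simpa only [Nat.sub_add_cancel hn] using
      hconv.trans (hφ.iterate_primitive_succ_eqOn_lconv (n - 1)).symm
  have hderiv (i j : ℕ) (hij : i + j = n) :
      EqOn (iteratedDeriv j (lconv κ f)) (primitive^[i] φ) (Ioi 0) :=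
    (hprim.iteratedDeriv_of_isOpen isOpen_Ioi j).trans
      (hij ▸ hφ.iteratedDeriv_iterate_primitive i j)
  have hderiv_lt (j : ℕ) (hj : j < n) : ∃ ψ, Cm1 ψ ∧
      EqOn (iteratedDeriv j (lconv κ f)) (primitive ψ) (Ioi 0) :=
    ⟨_, hφ.iterate_primitive (n - (j + 1)), by
      simpa only [Function.iterate_succ_apply'] using hderiv (n - (j + 1) + 1) j (by omega)⟩
  refine ⟨hconv, fun j hj t ht => ?_, hφ.congr (hderiv 0 n (zero_add n)), fun j hj => ?_⟩
  · obtain ⟨ψ, hψ, heq⟩ := hderiv_lt j hj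
    exact ((hψ.hasDerivAt_primitive ht).congr_of_eventuallyEq
      (heq.eventuallyEq_of_mem (Ioi_mem_nhds ht))).differentiableAt
  · obtain ⟨ψ, hψ, heq⟩ := hderiv_lt j hj
    exact hψ.tendsto_primitive.congr' (heq.symm.eventuallyEq_of_mem self_mem_nhdsWithin)

/-- For `(κ, k) ∈ L_n`, `φ ∈ C_{-1}(0,∞)` and `f = k * φ`, the function
`g = κ * f` equals the `n`-fold integral `I₀₊ⁿ φ` on `(0,∞)`; in particular
`g ∈ Cⁿ_{-1}(0,∞)` and `g^{(j)}(0+) = 0` for `j = 0, …, n-1`. -/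
theorem statement13 (n : ℕ) (hn : 1 ≤ n) (κ k : ℝ → ℝ)
    (hκ : Cm1 κ) (hk : Cm10 k)
    (hL : ∀ t : ℝ, 0 < t → lconv κ k t = t ^ (n - 1) / (n - 1).factorial)
    (φ f : ℝ → ℝ) (hφ : Cm1 φ)
    (hf : ∀ t : ℝ, 0 < t → f t = lconv k φ t) :
    (∀ t : ℝ, 0 < t →
        lconv κ f t = ∫ τ in (0:ℝ)..t, (t - τ) ^ (n - 1) / (n - 1).factorial * φ τ) ∧
      (∀ j < n, ∀ t : ℝ, 0 < t → DifferentiableAt ℝ (iteratedDeriv j (lconv κ f)) t) ∧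
      Cm1 (iteratedDeriv n (lconv κ f)) ∧
      ∀ j < n, Filter.Tendsto (iteratedDeriv j (lconv κ f))
        (nhdsWithin 0 (Set.Ioi 0)) (nhds 0) :=
  statement13_general n hn κ k hκ hk.cm1 hL φ f hφ hf
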